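/- Comparison property of the Skorokhod reflection map: let x, y : [0,∞) → ℝ be functions bounded on compact intervals, with y nonnegative and nondecreasing. Define the Skorokhod reflection R(f)(t) := f(t) + sup_{0 ≤ s ≤ t} max(−f(s), 0). Then for all t ≥ 0, R(x + y)(t) ≥ R(x)(t). -/

import Mathlib

open MeasureTheory ProbabilityTheory Filter Set
open scoped ENNReal NNReal

theorem stmt18
    (x y : ℝ → ℝ)
    (hx : ∀ t : ℝ, BddAbove (x '' Icc 0 t) ∧ BddBelow (x '' Icc 0 t))
    (hy : ∀ t : ℝ, BddAbove (y '' Icc 0 t) ∧ BddBelow (y '' Icc 0 t))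
    (hynn : ∀ t, 0 ≤ t → 0 ≤ y t)
    (hymono : MonotoneOn y (Ici (0:ℝ))) :
    ∀ t, 0 ≤ t →
      x t + sSup ((fun s => max (-(x s)) 0) '' Icc 0 t) ≤
        (x t + y t) + sSup ((fun s => max (-(x s + y s)) 0) '' Icc 0 t) := by
  intro t ht
  have hb : BddAbove ((fun s => max (-(x s + y s)) 0) '' Icc 0 t) := by
    obtain ⟨m, hm⟩ := (hx t).2
    refine ⟨max (-m) 0, ?_⟩
    rintro _ ⟨s, hs, rfl⟩
    have h1 : m ≤ x s := hm ⟨s, hs, rfl⟩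
    have h2 := hynn s hs.1
    exact max_le_max (by linarith) le_rfl
  have key : sSup ((fun s => max (-(x s)) 0) '' Icc 0 t) ≤
      y t + sSup ((fun s => max (-(x s + y s)) 0) '' Icc 0 t) := by
    apply csSup_le ((nonempty_Icc.2 ht).image _)
    rintro _ ⟨s, hs, rfl⟩
    have h1 : max (-(x s + y s)) 0 ≤ sSup ((fun s => max (-(x s + y s)) 0) '' Icc 0 t) :=
      le_csSup hb ⟨s, hs, rfl⟩
    have h2 : y s ≤ y t := hymono hs.1 ht hs.2
    have h3 := hynn t ht
    have h4 := le_max_left (-(x s + y s)) 0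
    have h5 := le_max_right (-(x s + y s)) 0
    exact max_le (by linarith) (by linarith)
  linarith
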